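/- The series Σ_{k=0}^∞ (−1/1024)^k · ((−1/2)_k)^4 · (3/2)_k / (((1)_k)^4 · (2)_k) · (13120k⁶ + 34368k⁵ + 36144k⁴ + 17888k³ + 2956k² − 540k − 99) converges and equals −1024/π². -/

import Mathlib

/-!
Write `u = (1/2)_·`.  The proof uses the Wilf–Zeilberger method.  With
`h n k = u n ^ 6 * u (n+k) ^ 4 / ((2n)! * (k+2n)! ^ 4)`, the functions
`G n k = (-1)^n h n k p(n,k)` (`wzG`) and `F n k = (-1)^n h n k * 128 n (6n+4k+1)` (`wzF`) satisfy
`G n (k+1) - G n k = F (n+1) k - F n k` (`wz_pair`), for an explicit rational function `p`.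
The shape of `h` comes from accelerating Dougall's `₅F₄` sum with `b = c = d = 1/2`,
`a = e = k + 1/2`, where `(a, b, c, d, e)` moves by `(3, 1, 1, 1, 1)` at each step.  As `F 0 k = 0` and `F n k → 0`
geometrically in `n`, the sum `∑ n, G n k` does not depend on `k`.

Letting `k → ∞` under a geometric bound uniform in `k` (`hBound_le`, which gives dominated
convergence), every term with `n ≥ 1` disappears and the term `n = 0` tends to `128 / π ^ 2` by the
Wallis product.  At `k = 0` this is Guillera's series
`∑ (-1/1024)^n (1/2)_n^5 / n!^5 * (820 n^2 + 180 n + 13) = 128 / π ^ 2` (`guillera`).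

The series in the theorem is `-8` times Guillera's series plus a telescoping series `T (n+1) - T n`
with `T 0 = 0` and `T n → 0` (`summand_eq`).
-/

/-- The Pochhammer symbol `(x)_k = x (x+1) ⋯ (x+k-1) = Γ(x+k)/Γ(x)`. -/
noncomputable def poch (x : ℝ) (k : ℕ) : ℝ := ∏ i ∈ Finset.range k, (x + i)

open Filter Topology

lemma poch_succ (x : ℝ) (k : ℕ) : poch x (k + 1) = poch x k * (x + k) := by
  simp [poch, Finset.prod_range_succ]

lemma poch_half_pos (k : ℕ) : 0 < poch (1/2) k :=
  Finset.prod_pos fun i _ => by positivity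

lemma poch_one (k : ℕ) : poch 1 k = (k.factorial : ℝ) := by
  induction k with
  | zero => simp [poch]
  | succ k ih => rw [poch_succ, ih, Nat.factorial_succ]; push_cast; ring

lemma poch_two (k : ℕ) : poch 2 k = (k.factorial : ℝ) * (k + 1) := by
  induction k with
  | zero => simp [poch]
  | succ k ih => rw [poch_succ, ih, Nat.factorial_succ]; push_cast; ring

lemma poch_three_halves (k : ℕ) : poch (3/2) k = poch (1/2) k * (2 * k + 1) := by
  induction k with
  | zero => simp [poch]
  | succ k ih => rw [poch_succ, poch_succ, ih]; push_cast; ring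

lemma two_mul_sub_one_ne (k : ℕ) : (2 * (k : ℝ) - 1) ≠ 0 := by
  intro h
  have h1 : (2 * (k : ℝ)) = 1 := by linarith
  have h2 : 2 * k = 1 := by exact_mod_cast h1
  omega

lemma poch_neg_half (k : ℕ) : poch (-1/2) k = - poch (1/2) k / (2 * k - 1) := by
  induction k with
  | zero => simp [poch]
  | succ k ih =>
    have h1 := two_mul_sub_one_ne k
    have h2 := two_mul_sub_one_ne (k + 1)
    rw [poch_succ, poch_succ, ih]
    push_cast at h2 ⊢
    rw [div_mul_eq_mul_div, div_eq_div_iff h1 h2]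
    ring

/-! ### The Wilf–Zeilberger pair -/

/-- The common positive hypergeometric factor of the Wilf–Zeilberger pair. -/
noncomputable def wzH (n k : ℕ) : ℝ :=
  poch (1/2) n ^ 6 * poch (1/2) (n + k) ^ 4 /
    (((2 * n).factorial : ℝ) * ((k + 2 * n).factorial : ℝ) ^ 4)

/-- The numerator of the rational part of `wzG`. -/
noncomputable def wzP (x y : ℝ) : ℝ :=
  13 + 124*y + 480*y^2 + 960*y^3 + 1040*y^4 + 576*y^5 + 128*y^6 + 284*x + 2264*x*y
  + 6656*x*y^2 + 9344*x*y^3 + 6336*x*y^4 + 1664*x*y^5 + 2572*x^2 + 15200*x^2*y + 31488*x^2*y^2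
  + 27904*x^2*y^3 + 9024*x^2*y^4 + 11296*x^3 + 46784*x^3*y + 61440*x^3*y^2 + 26112*x^3*y^3
  + 25648*x^4 + 67264*x^4*y + 42496*x^4*y^2 + 29120*x^5 + 36736*x^5*y + 13120*x^6

/-- The component of the Wilf–Zeilberger pair that is summed over `n`. -/
noncomputable def wzG (n k : ℕ) : ℝ :=
  (-1) ^ n * wzH n k * (wzP n k / (2 * n + k + 1) ^ 4)

/-- The companion of `wzG`: its difference in `n` is the difference of `wzG` in `k`. -/
noncomputable def wzF (n k : ℕ) : ℝ :=
  (-1) ^ n * wzH n k * (128 * n * (6 * n + 4 * k + 1))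

lemma wzH_pos (n k : ℕ) : 0 < wzH n k := by
  have := poch_half_pos n
  have := poch_half_pos (n + k)
  unfold wzH; positivity

lemma wzH_succ_right (n k : ℕ) :
    wzH n (k + 1) = wzH n k * ((n + k + 1/2) / (2 * n + k + 1)) ^ 4 := by
  unfold wzH
  rw [← add_assoc, poch_succ, show k + 1 + 2 * n = (k + 2 * n) + 1 by ring, Nat.factorial_succ]
  have h1 : ((2 * n).factorial : ℝ) ≠ 0 := by positivity
  have h2 : ((k + 2 * n).factorial : ℝ) ≠ 0 := by positivity
  have h3 : (2 * n + k + 1 : ℝ) ≠ 0 := by positivity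
  push_cast
  rw [show (k + 2 * n + 1 : ℝ) = 2 * n + k + 1 by ring]
  field_simp
  ring

lemma wzH_succ_left (n k : ℕ) :
    wzH (n + 1) k = wzH n k * ((n + 1/2) ^ 6 * (n + k + 1/2) ^ 4 /
      ((2 * n + 1) * (2 * n + 2) * ((2 * n + k + 1) * (2 * n + k + 2)) ^ 4)) := by
  unfold wzH
  rw [show n + 1 + k = (n + k) + 1 by ring, poch_succ, poch_succ,
    show k + 2 * (n + 1) = (k + 2 * n + 1) + 1 by ring, show 2 * (n + 1) = 2 * n + 1 + 1 by ring,
    Nat.factorial_succ, Nat.factorial_succ, Nat.factorial_succ, Nat.factorial_succ]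
  have h1 : ((2 * n).factorial : ℝ) ≠ 0 := by positivity
  have h2 : ((k + 2 * n).factorial : ℝ) ≠ 0 := by positivity
  have h3 : (2 * n + k + 1 : ℝ) ≠ 0 := by positivity
  have h4 : (2 * n + k + 2 : ℝ) ≠ 0 := by positivity
  push_cast
  rw [show (k + 2 * n + 1 + 1 : ℝ) = 2 * n + k + 2 by ring,
    show (k + 2 * n + 1 : ℝ) = 2 * n + k + 1 by ring, show (2 * n + 1 + 1 : ℝ) = 2 * n + 2 by ring]
  field_simp
  ring

lemma wz_pair (n k : ℕ) : wzG n (k + 1) - wzG n k = wzF (n + 1) k - wzF n k := by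
  unfold wzG wzF
  rw [wzH_succ_right, wzH_succ_left]
  have key : ∀ x y : ℝ, 0 ≤ x → 0 ≤ y →
      ((x + y + 1/2) / (2 * x + y + 1)) ^ 4 * (wzP x (y + 1) / (2 * x + (y + 1) + 1) ^ 4)
        - wzP x y / (2 * x + y + 1) ^ 4
      = - ((x + 1/2) ^ 6 * (x + y + 1/2) ^ 4 /
          ((2 * x + 1) * (2 * x + 2) * ((2 * x + y + 1) * (2 * x + y + 2)) ^ 4))
          * (128 * (x + 1) * (6 * (x + 1) + 4 * y + 1))
        - 128 * x * (6 * x + 4 * y + 1) := by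
    intro x y hx hy
    have h3 : (2 * x + y + 1 : ℝ) ≠ 0 := by positivity
    have h4 : (2 * x + y + 2 : ℝ) ≠ 0 := by positivity
    have h5 : (2 * x + 1 : ℝ) ≠ 0 := by positivity
    have h6 : (x + 1 : ℝ) ≠ 0 := by positivity
    rw [show 2 * x + (y + 1) + 1 = 2 * x + y + 2 by ring, show 2 * x + 2 = 2 * (x + 1) by ring]
    unfold wzP
    field_simp
    ring
  have := key n k (by positivity) (by positivity)
  push_cast
  linear_combination ((-1) ^ n * wzH n k) * this

/-! ### Bounds uniform in `k` -/

/-- The Wallis products control the Pochhammer symbols `(1/2)_k`. -/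
lemma poch_half_sq (k : ℕ) :
    (poch (1/2) k / (k.factorial : ℝ)) ^ 2 * (2 * k + 1) = (Real.Wallis.W k)⁻¹ := by
  induction k with
  | zero => simp [poch, Real.Wallis.W]
  | succ k ih =>
    rw [Real.Wallis.W_succ, mul_inv, ← ih, poch_succ, Nat.factorial_succ]
    push_cast
    have : (k.factorial : ℝ) ≠ 0 := by positivity
    field_simp
    ring

lemma one_le_W (k : ℕ) : 1 ≤ Real.Wallis.W k := by
  induction k with
  | zero => simp [Real.Wallis.W]
  | succ k ih =>
    rw [Real.Wallis.W_succ]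
    refine one_le_mul_of_one_le_of_one_le ih ?_
    rw [div_mul_div_comm, one_le_div (by positivity)]
    nlinarith

/-- `wzH` multiplied by a bound, up to a constant, for the rational parts of both `wzG` and `wzF`. -/
noncomputable def hBound (n k : ℕ) : ℝ := wzH n k * (2 * n + 2 * k + 1) ^ 2

lemma hBound_nonneg (n k : ℕ) : 0 ≤ hBound n k := by
  have := wzH_pos n k
  unfold hBound; positivity

lemma hBound_zero (k : ℕ) : hBound 0 k = (Real.Wallis.W k)⁻¹ ^ 2 := by
  rw [← poch_half_sq]
  simp only [hBound, wzH]
  simp [poch]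
  ring

/-- The factor `1 / 64` gives the uniform geometric decay, and the factor
`(2n+1) / (2n+k+1)` makes every term with positive first index vanish as `k → ∞`. -/
lemma hBound_succ (n k : ℕ) :
    hBound (n + 1) k ≤ hBound n k * (1 / 64 * ((2 * n + 1) / (2 * n + k + 1))) := by
  have h0 := hBound_nonneg n k
  have e : hBound (n + 1) k = hBound n k * (1 / 64 * ((2 * n + 1) / (2 * n + k + 1)) *
      ((((n + k + 1/2) / (2 * n + k + 1)) ^ 2 * ((n + k + 3/2) / (2 * n + k + 2)) ^ 2) *
       (((2 * n + 1) / (2 * n + 2)) * ((2 * n + 1) / (2 * n + k + 1)) *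
        ((2 * n + 1) / (2 * n + k + 2)) ^ 2))) := by
    unfold hBound
    rw [wzH_succ_left]
    push_cast
    have h3 : (2 * n + k + 1 : ℝ) ≠ 0 := by positivity
    have h4 : (2 * n + k + 2 : ℝ) ≠ 0 := by positivity
    have h5 : (2 * n + 1 : ℝ) ≠ 0 := by positivity
    field_simp
    ring
  rw [e]
  refine mul_le_mul_of_nonneg_left ?_ h0
  refine mul_le_of_le_one_right (by positivity) ?_
  have hn : (0 : ℝ) ≤ n := by positivity
  have hk : (0 : ℝ) ≤ k := by positivity
  have a1 : ((n + k + 1/2) / (2 * n + k + 1) : ℝ) ≤ 1 := by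
    rw [div_le_one (by positivity)]; linarith
  have a2 : ((n + k + 3/2) / (2 * n + k + 2) : ℝ) ≤ 1 := by
    rw [div_le_one (by positivity)]; linarith
  have a3 : ((2 * n + 1) / (2 * n + 2) : ℝ) ≤ 1 := by
    rw [div_le_one (by positivity)]; linarith
  have a4 : ((2 * n + 1) / (2 * n + k + 1) : ℝ) ≤ 1 := by
    rw [div_le_one (by positivity)]; linarith
  have a5 : ((2 * n + 1) / (2 * n + k + 2) : ℝ) ≤ 1 := by
    rw [div_le_one (by positivity)]; linarith
  refine mul_le_one₀ (mul_le_one₀ ?_ (by positivity) ?_) (by positivity)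
    (mul_le_one₀ (mul_le_one₀ a3 (by positivity) a4) (by positivity) ?_)
  · exact pow_le_one₀ (by positivity) a1
  · exact pow_le_one₀ (by positivity) a2
  · exact pow_le_one₀ (by positivity) a5

lemma hBound_le (n k : ℕ) : hBound n k ≤ (1 / 64) ^ n := by
  induction n with
  | zero =>
    rw [hBound_zero, pow_zero]
    exact pow_le_one₀ (inv_nonneg.2 (Real.Wallis.W_pos k).le) (inv_le_one_of_one_le₀ (one_le_W k))
  | succ n ih =>
    refine (hBound_succ n k).trans ?_
    rw [pow_succ]
    refine mul_le_mul ih ?_ (by positivity) (by positivity)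
    refine mul_le_of_le_one_right (by norm_num) ?_
    rw [div_le_one (by positivity)]
    have hk : (0 : ℝ) ≤ k := by positivity
    linarith

lemma hBound_succ_tendsto (n : ℕ) : Tendsto (fun k => hBound (n + 1) k) atTop (𝓝 0) := by
  have hlim : Tendsto (fun k : ℕ => (2 * (n : ℝ) + 1) / (k : ℝ)) atTop (𝓝 0) :=
    tendsto_const_div_atTop_nhds_zero_nat _
  refine squeeze_zero' (Eventually.of_forall fun k => hBound_nonneg _ _) ?_ hlim
  filter_upwards [eventually_gt_atTop 0] with k hk
  have hk' : (0 : ℝ) < k := by exact_mod_cast hk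
  refine (hBound_succ n k).trans ?_
  have h1 : hBound n k ≤ 1 := (hBound_le n k).trans (pow_le_one₀ (by norm_num) (by norm_num))
  have h2 : ((2 * n + 1) / (2 * n + k + 1) : ℝ) ≤ (2 * n + 1) / k :=
    div_le_div_of_nonneg_left (by positivity) hk' (by have : (0:ℝ) ≤ n := by positivity
                                                      linarith)
  have h3 : (0 : ℝ) ≤ (2 * n + 1) / (2 * n + k + 1) := by positivity
  calc hBound n k * (1 / 64 * ((2 * n + 1) / (2 * n + k + 1)))
      ≤ 1 * (1 / 64 * ((2 * n + 1) / (2 * n + k + 1))) :=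
        mul_le_mul_of_nonneg_right h1 (by positivity)
    _ ≤ _ := by linarith

lemma wzG_abs_le (n k : ℕ) : |wzG n k| ≤ 205 * hBound n k := by
  have hH := wzH_pos n k
  have hn : (0 : ℝ) ≤ n := by positivity
  have hk : (0 : ℝ) ≤ k := by positivity
  have key : ∀ x y : ℝ, 0 ≤ x → 0 ≤ y →
      0 ≤ wzP x y / (2 * x + y + 1) ^ 4 ∧
      wzP x y / (2 * x + y + 1) ^ 4 ≤ 205 * (2 * x + 2 * y + 1) ^ 2 := by
    intro x y hx hy
    refine ⟨by unfold wzP; positivity, ?_⟩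
    rw [div_le_iff₀ (by positivity)]
    -- `205` is the least constant for which all coefficients of this difference are nonnegative.
    have h1 : 205 * (2 * x + y + 1) ^ 2 * (2 * x + y + 1) ^ 4 - wzP x y ≥ 0 := by
      unfold wzP
      ring_nf
      positivity
    have h2 : 205 * (2 * x + y + 1) ^ 2 ≤ 205 * (2 * x + 2 * y + 1) ^ 2 := by
      gcongr; linarith
    nlinarith [mul_le_mul_of_nonneg_right h2 (by positivity : 0 ≤ (2 * x + y + 1) ^ 4)]
  obtain ⟨h1, h2⟩ := key n k hn hk
  unfold wzG hBound
  rw [abs_mul, abs_mul, abs_pow, abs_neg, abs_one, one_pow, one_mul, abs_of_pos hH, abs_of_nonneg h1]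
  nlinarith [mul_le_mul_of_nonneg_left h2 hH.le]

lemma wzF_abs_le (n k : ℕ) : |wzF n k| ≤ 768 * hBound n k := by
  have hH := wzH_pos n k
  have hn : (0 : ℝ) ≤ n := by positivity
  have hk : (0 : ℝ) ≤ k := by positivity
  have h2 : (128 * n * (6 * n + 4 * k + 1) : ℝ) ≤ 768 * (2 * n + 2 * k + 1) ^ 2 := by
    nlinarith [mul_nonneg hn hk, mul_nonneg hn hn, mul_nonneg hk hk]
  unfold wzF hBound
  rw [abs_mul, abs_mul, abs_pow, abs_neg, abs_one, one_pow, one_mul, abs_of_pos hH,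
    abs_of_nonneg (by positivity : (0 : ℝ) ≤ 128 * n * (6 * n + 4 * k + 1))]
  nlinarith [mul_le_mul_of_nonneg_left h2 hH.le]

lemma summable_geom (c : ℝ) : Summable fun n : ℕ => c * (1 / 64 : ℝ) ^ n :=
  (summable_geometric_of_lt_one (by norm_num) (by norm_num)).mul_left c

lemma wzG_norm_le (n k : ℕ) : ‖wzG n k‖ ≤ 205 * (1 / 64 : ℝ) ^ n := by
  rw [Real.norm_eq_abs]
  exact (wzG_abs_le n k).trans (mul_le_mul_of_nonneg_left (hBound_le n k) (by norm_num))

lemma wzF_norm_le (n k : ℕ) : ‖wzF n k‖ ≤ 768 * (1 / 64 : ℝ) ^ n := by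
  rw [Real.norm_eq_abs]
  exact (wzF_abs_le n k).trans (mul_le_mul_of_nonneg_left (hBound_le n k) (by norm_num))

lemma summable_wzG (k : ℕ) : Summable fun n => wzG n k :=
  (summable_geom 205).of_norm_bounded fun n => wzG_norm_le n k

lemma summable_wzF (k : ℕ) : Summable fun n => wzF n k :=
  (summable_geom 768).of_norm_bounded fun n => wzF_norm_le n k

/-! ### Guillera's series -/

lemma hasSum_telescope {f : ℕ → ℝ} (hf : Summable f) (h0 : f 0 = 0) :
    HasSum (fun n => f (n + 1) - f n) 0 := by
  have h1 : HasSum (fun n => f (n + 1)) (∑' n, f n) := by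
    rw [hasSum_nat_add_iff 1]
    simpa [h0] using hf.hasSum
  simpa using h1.sub hf.hasSum

/-- Summing `wz_pair` over `n` telescopes the right-hand side to `0`. -/
lemma tsum_wzG_const (k : ℕ) : ∑' n, wzG n k = ∑' n, wzG n 0 := by
  induction k with
  | zero => rfl
  | succ k ih =>
    rw [← ih, ← sub_eq_zero, ← (summable_wzG (k + 1)).tsum_sub (summable_wzG k)]
    simp_rw [wz_pair]
    exact (hasSum_telescope (summable_wzF k) (by simp [wzF])).tsum_eq

/-- The evaluation that produces `π`: the only term of `∑ n, wzG n k` surviving as `k → ∞`. -/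
lemma wzG_zero_tendsto : Tendsto (fun k => wzG 0 k) atTop (𝓝 (128 / Real.pi ^ 2)) := by
  have e : ∀ k : ℕ, wzG 0 k = (Real.Wallis.W k)⁻¹ ^ 2 *
      (32 - 16 * (1 / ((k : ℝ) + 1)) - 4 * (1 / ((k : ℝ) + 1)) ^ 2 + (1 / ((k : ℝ) + 1)) ^ 4) := by
    intro k
    rw [← hBound_zero]
    unfold wzG hBound wzP
    have h1 : ((k : ℝ) + 1) ≠ 0 := by positivity
    simp
    field_simp
    ring
  have hW : Tendsto (fun k => (Real.Wallis.W k)⁻¹ ^ 2) atTop (𝓝 ((Real.pi / 2)⁻¹ ^ 2)) :=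
    (Real.Wallis.tendsto_W_nhds_pi_div_two.inv₀ (by positivity)).pow 2
  have hz : Tendsto (fun k : ℕ => 1 / ((k : ℝ) + 1)) atTop (𝓝 0) :=
    tendsto_one_div_add_atTop_nhds_zero_nat
  have h := hW.mul
    (((tendsto_const_nhds (x := (32 : ℝ))).sub (hz.const_mul 16)).sub ((hz.pow 2).const_mul 4)
      |>.add (hz.pow 4))
  simp_rw [e]
  convert h using 2
  field_simp
  norm_num

lemma guillera : HasSum (fun n => wzG n 0) (128 / Real.pi ^ 2) := by
  have h1 : Tendsto (fun k => ∑' n, wzG n k) atTop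
      (𝓝 (∑' n, if n = 0 then 128 / Real.pi ^ 2 else 0)) := by
    refine tendsto_tsum_of_dominated_convergence (summable_geom 205) ?_
      (Eventually.of_forall fun k n => wzG_norm_le n k)
    rintro (_ | n)
    · simpa using wzG_zero_tendsto
    · have h2 : Tendsto (fun k => 205 * hBound (n + 1) k) atTop (𝓝 0) := by
        simpa using (hBound_succ_tendsto n).const_mul 205
      simpa using squeeze_zero_norm (fun k => wzG_abs_le (n + 1) k) h2
  simp_rw [tsum_wzG_const] at h1
  rw [tsum_ite_eq] at h1
  rw [tendsto_nhds_unique h1 tendsto_const_nhds]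
  exact (summable_wzG 0).hasSum

/-! ### Reduction to Guillera's series -/

/-- The hypergeometric factor of Guillera's series. -/
noncomputable def gTerm (n : ℕ) : ℝ :=
  (-1/1024) ^ n * (poch (1/2) n / (n.factorial : ℝ)) ^ 5

lemma gTerm_succ (n : ℕ) :
    gTerm (n + 1) = gTerm n * (-1/1024 * ((n + 1/2) / (n + 1)) ^ 5) := by
  unfold gTerm
  rw [poch_succ, Nat.factorial_succ]
  have : (n.factorial : ℝ) ≠ 0 := by positivity
  push_cast
  field_simp
  ring

lemma gTerm_abs_le (n : ℕ) : |gTerm n| ≤ (1/1024) ^ n := by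
  induction n with
  | zero => simp [gTerm, poch]
  | succ n ih =>
    rw [gTerm_succ, pow_succ (1/1024 : ℝ), abs_mul]
    refine mul_le_mul ih ?_ (abs_nonneg _) (by positivity)
    have h0 : (0 : ℝ) ≤ (n + 1/2) / (n + 1) := by positivity
    have h1 : ((n + 1/2) / (n + 1) : ℝ) ≤ 1 := by
      rw [div_le_one (by positivity)]; linarith
    rw [abs_mul, abs_of_nonneg (pow_nonneg h0 5)]
    have := pow_le_one₀ h0 h1 (n := 5)
    norm_num [abs_div] at this ⊢
    linarith

lemma wzG_eq (n : ℕ) : wzG n 0 = gTerm n * (820 * n ^ 2 + 180 * n + 13) := by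
  have hH : (-1) ^ n * wzH n 0 = gTerm n := by
    induction n with
    | zero => simp [wzH, gTerm, poch]
    | succ n ih =>
      rw [gTerm_succ, ← ih, wzH_succ_left]
      push_cast
      have h5 : (2 * n + 1 : ℝ) ≠ 0 := by positivity
      simp only [add_zero]
      field_simp
      ring
  unfold wzG
  rw [hH]
  have h5 : (2 * n + 1 : ℝ) ≠ 0 := by positivity
  unfold wzP
  simp only [Nat.cast_zero, add_zero]
  field_simp
  ring

/-- The antidifference linking the target series to Guillera's series. -/
noncomputable def antidiff (n : ℕ) : ℝ :=
  gTerm n * (-32768 * n ^ 4 * (4 * n ^ 2 - 4 * n + 5) / (2 * n - 1) ^ 4)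

lemma summable_antidiff : Summable antidiff := by
  have hs : Summable fun n : ℕ => 425984 * ((n : ℝ) ^ 2 * (1/1024 : ℝ) ^ n) :=
    (summable_pow_mul_geometric_of_norm_lt_one 2 (r := (1/1024 : ℝ)) (by norm_num)).mul_left 425984
  refine hs.of_norm_bounded fun n => ?_
  rw [Real.norm_eq_abs]
  rcases Nat.eq_zero_or_pos n with rfl | hn
  · simp [antidiff]
  have hn' : (1 : ℝ) ≤ n := by exact_mod_cast hn
  have hr : ((n : ℝ) / (2 * n - 1)) ^ 4 ≤ 1 :=
    pow_le_one₀ (div_nonneg (by linarith) (by linarith))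
      ((div_le_one (by linarith)).2 (by linarith))
  have hr0 : 0 ≤ ((n : ℝ) / (2 * n - 1)) ^ 4 := by positivity
  have hq : 0 ≤ 4 * (n : ℝ) ^ 2 - 4 * n + 5 := by nlinarith
  have hq' : 4 * (n : ℝ) ^ 2 - 4 * n + 5 ≤ 13 * n ^ 2 := by nlinarith
  have e : -32768 * (n : ℝ) ^ 4 * (4 * n ^ 2 - 4 * n + 5) / (2 * n - 1) ^ 4
      = -(32768 * (((n : ℝ) / (2 * n - 1)) ^ 4 * (4 * n ^ 2 - 4 * n + 5))) := by
    rw [div_pow]; ring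
  unfold antidiff
  have hm : 0 ≤ 32768 * (((n : ℝ) / (2 * n - 1)) ^ 4 * (4 * n ^ 2 - 4 * n + 5)) :=
    mul_nonneg (by norm_num) (mul_nonneg hr0 hq)
  rw [e, abs_mul, abs_neg, abs_of_nonneg hm]
  have h1 : ((n : ℝ) / (2 * n - 1)) ^ 4 * (4 * n ^ 2 - 4 * n + 5) ≤ 13 * n ^ 2 :=
    (mul_le_of_le_one_left hq hr).trans hq'
  calc |gTerm n| * (32768 * (((n : ℝ) / (2 * n - 1)) ^ 4 * (4 * n ^ 2 - 4 * n + 5)))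
      ≤ (1/1024) ^ n * (32768 * (13 * n ^ 2)) := by
        refine mul_le_mul (gTerm_abs_le n) ?_ hm (by positivity)
        linarith
    _ = _ := by ring

lemma summand_eq (k : ℕ) :
    (-1/1024 : ℝ) ^ k * (poch (-1/2) k) ^ 4 * poch (3/2) k /
          ((poch 1 k) ^ 4 * poch 2 k) *
          (13120 * (k : ℝ) ^ 6 + 34368 * (k : ℝ) ^ 5 + 36144 * (k : ℝ) ^ 4
            + 17888 * (k : ℝ) ^ 3 + 2956 * (k : ℝ) ^ 2 - 540 * k - 99)
      = -8 * wzG k 0 + (antidiff (k + 1) - antidiff k) := by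
  have h1 := two_mul_sub_one_ne k
  have e : (-1/1024 : ℝ) ^ k * (poch (-1/2) k) ^ 4 * poch (3/2) k / ((poch 1 k) ^ 4 * poch 2 k)
      = gTerm k * ((2 * k + 1) / ((2 * k - 1) ^ 4 * (k + 1))) := by
    rw [poch_neg_half, poch_three_halves, poch_one, poch_two]
    unfold gTerm
    have : (k.factorial : ℝ) ≠ 0 := by positivity
    field_simp
  have key : ∀ x : ℝ, 2 * x - 1 ≠ 0 → 0 ≤ x →
      (2 * x + 1) / ((2 * x - 1) ^ 4 * (x + 1)) * (13120 * x ^ 6 + 34368 * x ^ 5 + 36144 * x ^ 4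
            + 17888 * x ^ 3 + 2956 * x ^ 2 - 540 * x - 99)
      = -8 * (820 * x ^ 2 + 180 * x + 13) + ((-1/1024 * ((x + 1/2) / (x + 1)) ^ 5) *
        (-32768 * (x + 1) ^ 4 * (4 * (x + 1) ^ 2 - 4 * (x + 1) + 5) / (2 * x + 1) ^ 4)
        - -32768 * x ^ 4 * (4 * x ^ 2 - 4 * x + 5) / (2 * x - 1) ^ 4) := by
    intro x hx hx0
    have h5 : (2 * x + 1 : ℝ) ≠ 0 := by positivity
    have h6 : (x + 1 : ℝ) ≠ 0 := by positivity
    field_simp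
    ring
  rw [e, wzG_eq]
  unfold antidiff
  rw [gTerm_succ]
  push_cast
  rw [show (2 * ((k : ℝ) + 1) - 1) = 2 * k + 1 by ring]
  linear_combination gTerm k * key k h1 (by positivity)

theorem series_double1 :
    HasSum
      (fun k : ℕ =>
        (-1/1024 : ℝ) ^ k * (poch (-1/2) k) ^ 4 * poch (3/2) k /
          ((poch 1 k) ^ 4 * poch 2 k) *
          (13120 * (k : ℝ) ^ 6 + 34368 * (k : ℝ) ^ 5 + 36144 * (k : ℝ) ^ 4
            + 17888 * (k : ℝ) ^ 3 + 2956 * (k : ℝ) ^ 2 - 540 * k - 99))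
      (-1024 / Real.pi ^ 2) := by
  rw [funext summand_eq, show -1024 / Real.pi ^ 2 = -8 * (128 / Real.pi ^ 2) + 0 by ring]
  exact (guillera.mul_left (-8)).add (hasSum_telescope summable_antidiff (by simp [antidiff]))
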